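/- arXiv:0812.1366 — 3 statements merged into one kernel-verified Lean document; each statement's English description precedes it below -/
import Mathlib

section
/- For every natural number k and every polynomial p ∈ ℤ[X], p lies in the ideal of ℤ[X] generated by S_{k+1} if and only if, for every integer s with 1 ≤ s ≤ k+1, the evaluation of p (viewed as a real polynomial) at the real number 2·cos(πs/(k+2)) is zero. (This expresses that the level-k fusion ideal I_k(SU(2)) ⊂ R(SU(2)) ≅ ℤ[X], generated by the character χ_{k+1} = S_{k+1}, is exactly the vanishing ideal of the regular elements of the cyclic group T_{k+2}.) -/
open Polynomial

/-!
The polynomial `S n` is monic of degree `n` and satisfies `S n (2 cos θ) · sin θ = sin ((n+1)θ)`.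
Hence `S (k+1)` vanishes at the `k+1` points `2 cos (πs/(k+2))`, `1 ≤ s ≤ k+1`, which gives one
direction. These points are pairwise distinct because `cos` is injective on `[0, π]`. Conversely, if
`p` vanishes at all of them, then so does its remainder modulo the monic polynomial `S (k+1)`; this
remainder has degree at most `k` and at least `k+1` real roots, so it is zero. Monicity makes
the division possible over `ℤ`, so no denominators appear.
-/

/-- `S n` is the `n`-th rescaled Chebyshev polynomial of the second kind in `ℤ[X]`,
the monic degree-`n` polynomial with `S n (2 cos θ) = sin ((n+1)θ)/sin θ`;
it is the character of the `(n+1)`-dimensional irreducible `SU(2)`-representation. -/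
noncomputable def S : ℕ → Polynomial ℤ
  | 0 => 1
  | 1 => Polynomial.X
  | n + 2 => Polynomial.X * S (n + 1) - S n

theorem S_monic_natDegree (n : ℕ) : (S n).Monic ∧ (S n).natDegree = n := by
  induction n using Nat.twoStepInduction with
  | zero => simp [S]
  | one => simp [S, monic_X]
  | more n ih₀ ih₁ =>
    have hm : (X * S (n + 1)).Monic := monic_X.mul ih₁.1
    have hd : (X * S (n + 1)).natDegree = n + 2 := by
      rw [monic_X.natDegree_mul ih₁.1, ih₁.2, natDegree_X]
      ring
    have hlt : (S n).natDegree < (X * S (n + 1)).natDegree := by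
      rw [hd, ih₀.2]
      omega
    rw [S]
    exact ⟨hm.sub_of_left (degree_lt_degree hlt),
      (natDegree_sub_eq_left_of_natDegree_lt hlt).trans hd⟩

/-- The defining trigonometric identity, with `sin θ` cleared from the denominator. -/
theorem S_aeval_two_cos_mul_sin (n : ℕ) (θ : ℝ) :
    aeval (2 * Real.cos θ) (S n) * Real.sin θ = Real.sin ((n + 1) * θ) := by
  induction n using Nat.twoStepInduction with
  | zero => simp [S]
  | one =>
    rw [S, aeval_X, show (((1 : ℕ) : ℝ) + 1) * θ = 2 * θ by norm_num, Real.sin_two_mul]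
    ring
  | more n ih₀ ih₁ =>
    rw [S, map_sub, map_mul, aeval_X, sub_mul, mul_assoc, ih₀, ih₁]
    -- sum-to-product: `sin (a + θ) + sin (a - θ) = 2 cos θ sin a` with `a = (n + 2) θ`
    have h₁ := Real.sin_add (((n + 1 : ℕ) + 1) * θ) θ
    have h₂ := Real.sin_sub (((n + 1 : ℕ) + 1) * θ) θ
    rw [show ((n + 1 : ℕ) + 1) * θ + θ = ((n + 2 : ℕ) + 1) * θ by push_cast; ring] at h₁
    rw [show ((n + 1 : ℕ) + 1) * θ - θ = (n + 1) * θ by push_cast; ring] at h₂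
    rw [h₁, h₂]
    ring

theorem S_aeval_node (k : ℕ) (s : ℤ) (h₁ : 1 ≤ s) (h₂ : s ≤ k + 1) :
    aeval (2 * Real.cos (Real.pi * s / (k + 2))) (S (k + 1)) = 0 := by
  have hs₁ : (1 : ℝ) ≤ s := by exact_mod_cast h₁
  have hs₂ : (s : ℝ) ≤ k + 1 := by exact_mod_cast h₂
  have hk : (0 : ℝ) < k + 2 := by positivity
  have hsin : 0 < Real.sin (Real.pi * s / (k + 2)) := by
    apply Real.sin_pos_of_pos_of_lt_pi
    · have := Real.pi_pos
      positivity
    · rw [div_lt_iff₀ hk]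
      exact mul_lt_mul_of_pos_left (by linarith) Real.pi_pos
  have h := S_aeval_two_cos_mul_sin (k + 1) (Real.pi * s / (k + 2))
  rw [show (((k + 1 : ℕ) : ℝ) + 1) * (Real.pi * s / (k + 2)) = s * Real.pi by
    push_cast; field_simp; ring, Real.sin_int_mul_pi] at h
  exact (mul_eq_zero.mp h).resolve_right hsin.ne'

theorem node_injective (k : ℕ) :
    Function.Injective fun i : Fin (k + 1) =>
      2 * Real.cos (Real.pi * ((i : ℤ) + 1 : ℤ) / (k + 2)) := by
  have hk : (0 : ℝ) < k + 2 := by positivity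
  have hmem (i : Fin (k + 1)) :
      Real.pi * ((i : ℤ) + 1 : ℤ) / (k + 2) ∈ Set.Icc 0 Real.pi := by
    have hi : (i : ℝ) + 1 ≤ k + 1 := by exact_mod_cast i.isLt
    have := Real.pi_pos
    push_cast
    refine ⟨by positivity, ?_⟩
    rw [div_le_iff₀ hk]
    exact mul_le_mul_of_nonneg_left (by linarith) this.le
  intro i j hij
  have h := Real.injOn_cos (hmem i) (hmem j) (mul_left_cancel₀ two_ne_zero hij)
  have h' := mul_left_cancel₀ Real.pi_ne_zero ((div_left_inj' hk.ne').mp h)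
  have h'' : ((i : ℤ) + 1) = (j : ℤ) + 1 := by exact_mod_cast h'
  exact Fin.ext (by omega)

/-- The level-`k` fusion ideal `I_k(SU(2)) = (χ_{k+1}) ⊂ R(SU(2)) ≅ ℤ[X]` is the vanishing
ideal of the regular elements of `T_{k+2}`, i.e. `p ∈ (S_{k+1})` iff `p` vanishes at the
real points `2 cos (πs/(k+2))` for `s = 1, …, k+1`. -/
theorem fusion_ideal_eq_vanishing_ideal (k : ℕ) (p : Polynomial ℤ) :
    p ∈ Ideal.span {S (k + 1)} ↔
      ∀ s : ℤ, 1 ≤ s → s ≤ k + 1 →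
        Polynomial.aeval (2 * Real.cos (Real.pi * s / (k + 2))) p = 0 := by
  rw [Ideal.mem_span_singleton]
  constructor
  · rintro ⟨q, rfl⟩ s h₁ h₂
    rw [map_mul, S_aeval_node k s h₁ h₂, zero_mul]
  · intro hp
    obtain ⟨hm, hd⟩ := S_monic_natDegree (k + 1)
    rw [← modByMonic_eq_zero_iff_dvd hm]
    have hdeg : (p %ₘ S (k + 1)).natDegree < k + 1 := by
      have := natDegree_modByMonic_lt p hm (fun h => by simp [h] at hd)
      rwa [hd] at this
    have hinj : Function.Injective (Int.castRingHom ℝ) := Int.cast_injective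
    apply (Polynomial.map_eq_zero_iff hinj).mp
    apply eq_zero_of_natDegree_lt_card_of_eval_eq_zero _ (node_injective k)
    · intro i
      have h₁ : (1 : ℤ) ≤ (i : ℤ) + 1 := by omega
      have h₂ : ((i : ℤ) + 1) ≤ k + 1 := by omega
      have h := hp _ h₁ h₂
      rw [← modByMonic_add_div p (S (k + 1)), map_add, map_mul, S_aeval_node k _ h₁ h₂,
        zero_mul, add_zero] at h
      rw [eval_map]
      exact h
    · rw [Fintype.card_fin]
      exact natDegree_map_le.trans_lt hdeg
end

section
/- For all natural numbers k and l with 0 ≤ l ≤ k, the polynomial S_{k+1} divides S_k · S_l − S_{k−l} in ℤ[X]. (This expresses the involution property τ_l τ_k = τ_{k−l} of the element τ_k in the level-k fusion ring R_k(SU(2)) = ℤ[X]/(S_{k+1}).) -/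
/-!
The quotient is explicit: for `l ≥ 1`, `S k * S l - S (k - l) = S (k + 1) * S (l - 1)`. Writing
`k = m + l`, the expression `S (m + l) * S l - S (m + l + 1) * S (l - 1)` is a Casoratian of two
solutions of the recurrence `u (n + 2) = X * u (n + 1) - u n`, hence does not depend on `l`, and
it equals `S m` by the recurrence itself when `l = 1` (`S_mul_S_sub`).
-/

open Polynomial

theorem S_rec (n : ℕ) : S (n + 2) = X * S (n + 1) - S n := by
  rw [S]

/-- The Casoratian identity, with indices shifted by one to avoid `l - 1`. -/
theorem S_mul_S_sub (m l : ℕ) :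
    S (m + l + 1) * S (l + 1) - S m = S (m + l + 2) * S l := by
  induction l with
  | zero =>
    have h0 : S 0 = 1 := by rw [S]
    have h1 : S (0 + 1) = X := by rw [S]
    rw [h0, h1, Nat.add_zero, S_rec m]
    ring
  | succ l ih =>
    have h1 : S (m + (l + 1) + 2) = X * S (m + l + 2) - S (m + l + 1) := S_rec (m + l + 1)
    have h2 : S (l + 1 + 1) = X * S (l + 1) - S l := S_rec l
    have h3 : S (m + (l + 1) + 1) = S (m + l + 2) := rfl
    rw [h1, h2, h3]
    linear_combination ih

/-- The involution property `τ_l τ_k = τ_{k-l}` of the element `τ_k` in the level-`k`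
fusion ring `R_k(SU(2)) = ℤ[X]/(S_{k+1})`. -/
theorem tau_k_involution (k l : ℕ) (h : l ≤ k) :
    S (k + 1) ∣ S k * S l - S (k - l) := by
  obtain ⟨m, rfl⟩ := Nat.exists_eq_add_of_le' h
  rw [Nat.add_sub_cancel]
  cases l with
  | zero =>
    have h0 : S 0 = 1 := by rw [S]
    simp [h0]
  | succ l => exact ⟨S l, S_mul_S_sub m l⟩
end

section
/- Let u₁, u₂, u₃ ∈ [0,1] be real numbers. There exist matrices g₁, g₂, g₃ in SU(2) such that each gᵢ is conjugate within SU(2) to the diagonal matrix diag(e^{iπuᵢ}, e^{−iπuᵢ}) and g₁g₂g₃ = I, if and only if u₃ ≤ u₁+u₂, u₁ ≤ u₂+u₃, u₂ ≤ u₃+u₁ and u₁+u₂+u₃ ≤ 2. (The product of the three conjugacy classes of elements exp(uᵢρ) contains the identity exactly when (u₁,u₂,u₃) lies in the Jeffrey–Weitsman polytope Δ.) -/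
/-!
Every element of `SU(2)` has the form `!![a, b; -b̄, ā]` with `|a|² + |b|² = 1`, and its conjugacy
class is determined by its trace: `exists_conj_diagExp` diagonalizes an element with `Re a = cos πu`
by normalizing an explicit eigenvector. Hence the problem is to determine the possible traces of
`g₁ g₂`. Up to conjugation `g₁ g₂` is `D₁ k D₂ k⁻¹` with `Dᵢ` diagonal and `k = !![a, b; -b̄, ā]`, and
(`diag_mul_conj`)
`tr (D₁ k D₂ k⁻¹) = 2 |a|² cos π(u₁ + u₂) + 2 |b|² cos π(u₁ - u₂)`,
a convex combination of `2 cos π(u₁ + u₂)` and `2 cos π(u₁ - u₂)` in which every weight occurs.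
So the identity is attained exactly when `cos π(u₁ + u₂) ≤ cos πu₃ ≤ cos π(u₁ - u₂)`, and by
monotonicity of the cosine on `[0, π]` this is the system of inequalities cutting out `Δ`.
-/

open Matrix

/-- The diagonal matrix `diag(e^{iπu}, e^{-iπu})`, i.e. `exp(uρ)` with
`ρ = iπ diag(1, -1)`; for `u ∈ [0,1]` these parametrize the conjugacy classes
of `SU(2)`. -/
noncomputable def diagExp (u : ℝ) : Matrix (Fin 2) (Fin 2) ℂ :=
  !![Complex.exp (Real.pi * u * Complex.I), 0; 0, Complex.exp (-(Real.pi * u) * Complex.I)]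

open ComplexConjugate

/-- The matrix `!![a, b; -b̄, ā]`; it lies in `SU(2)` when `|a|² + |b|² = 1`. -/
noncomputable def suMatrix (a b : ℂ) : Matrix (Fin 2) (Fin 2) ℂ :=
  !![a, b; -conj b, conj a]

lemma suMatrix_mul (a b c d : ℂ) :
    suMatrix a b * suMatrix c d = suMatrix (a * c - b * conj d) (a * d + b * conj c) := by
  ext i j
  fin_cases i <;> fin_cases j <;> simp [suMatrix, Matrix.mul_apply] <;> ring

lemma suMatrix_one : suMatrix 1 0 = 1 := by
  ext i j
  fin_cases i <;> fin_cases j <;> simp [suMatrix]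

lemma suMatrix_mul_star {a b : ℂ} (h : a * conj a + b * conj b = 1) :
    suMatrix a b * suMatrix (conj a) (-b) = 1 := by
  rw [suMatrix_mul, ← suMatrix_one]
  congr 1
  · simp [h]
  · simp; ring

lemma suMatrix_inv {a b : ℂ} (h : a * conj a + b * conj b = 1) :
    (suMatrix a b)⁻¹ = suMatrix (conj a) (-b) :=
  Matrix.inv_eq_right_inv (suMatrix_mul_star h)

lemma suMatrix_mem {a b : ℂ} (h : a * conj a + b * conj b = 1) :
    suMatrix a b ∈ Matrix.specialUnitaryGroup (Fin 2) ℂ := by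
  rw [Matrix.mem_specialUnitaryGroup_iff, Matrix.mem_unitaryGroup_iff]
  constructor
  · have hs : star (suMatrix a b) = suMatrix (conj a) (-b) := by
      ext i j
      fin_cases i <;> fin_cases j <;> simp [suMatrix, Matrix.star_apply]
    rw [hs, suMatrix_mul_star h]
  · simp [suMatrix, Matrix.det_fin_two_of, h]

lemma exists_eq_suMatrix {g : Matrix (Fin 2) (Fin 2) ℂ}
    (hg : g ∈ Matrix.specialUnitaryGroup (Fin 2) ℂ) :
    ∃ a b : ℂ, a * conj a + b * conj b = 1 ∧ g = suMatrix a b := by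
  rw [Matrix.mem_specialUnitaryGroup_iff, Matrix.mem_unitaryGroup_iff] at hg
  obtain ⟨hu, hd⟩ := hg
  -- The adjugate and the conjugate transpose are both the inverse of `g`.
  have hadj : star g = g.adjugate := by
    have h1 : g.adjugate * g = 1 := by rw [Matrix.adjugate_mul, hd, one_smul]
    exact (left_inv_eq_right_inv h1 hu).symm
  have h10 : g 1 0 = -conj (g 0 1) := by
    have := congrFun (congrFun hadj 1) 0
    simp [Matrix.adjugate_fin_two, Matrix.star_apply] at this
    simp [this]
  have h11 : g 1 1 = conj (g 0 0) := by
    have := congrFun (congrFun hadj 0) 0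
    simp [Matrix.adjugate_fin_two, Matrix.star_apply] at this
    simp [this]
  refine ⟨g 0 0, g 0 1, ?_, ?_⟩
  · rw [Matrix.det_fin_two, h10, h11] at hd
    linear_combination hd
  · ext i j
    fin_cases i <;> fin_cases j <;> simp [suMatrix, h10, h11]

lemma conj_exp_pi (u : ℝ) :
    conj (Complex.exp (Real.pi * u * Complex.I)) = Complex.exp (-(Real.pi * u) * Complex.I) := by
  rw [← Complex.exp_conj]
  simp

lemma exp_pi_mul_conj (u : ℝ) :
    Complex.exp (Real.pi * u * Complex.I) * conj (Complex.exp (Real.pi * u * Complex.I)) = 1 := by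
  rw [conj_exp_pi, ← Complex.exp_add]
  simp

lemma exp_pi_re (u : ℝ) :
    (Complex.exp (Real.pi * u * Complex.I)).re = Real.cos (Real.pi * u) := by
  rw [← Complex.ofReal_mul, Complex.exp_ofReal_mul_I_re]

lemma exp_pi_im (u : ℝ) :
    (Complex.exp (Real.pi * u * Complex.I)).im = Real.sin (Real.pi * u) := by
  rw [← Complex.ofReal_mul, Complex.exp_ofReal_mul_I_im]

lemma diagExp_eq_suMatrix (u : ℝ) :
    diagExp u = suMatrix (Complex.exp (Real.pi * u * Complex.I)) 0 := by
  rw [diagExp, suMatrix, conj_exp_pi]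
  simp

/-- An element of `SU(2)` with trace `2 cos πu` is conjugate in `SU(2)` to `diagExp u`. -/
lemma exists_conj_diagExp {p q : ℂ} (h : p * conj p + q * conj q = 1) {u : ℝ}
    (hp : p.re = Real.cos (Real.pi * u)) :
    ∃ k ∈ Matrix.specialUnitaryGroup (Fin 2) ℂ, suMatrix p q = k * diagExp u * k⁻¹ := by
  rw [diagExp_eq_suMatrix]
  have he := exp_pi_mul_conj u
  rw [← exp_pi_re] at hp
  set e := Complex.exp (Real.pi * u * Complex.I)
  have htr : p + conj p = e + conj e := by
    rw [Complex.add_conj, Complex.add_conj, hp]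
  suffices H : ∃ a b : ℂ, a * conj a + b * conj b = 1 ∧
      suMatrix p q * suMatrix a b = suMatrix a b * suMatrix e 0 by
    obtain ⟨a, b, hab, hm⟩ := H
    refine ⟨suMatrix a b, suMatrix_mem hab, ?_⟩
    rw [← hm, suMatrix_inv hab, mul_assoc, suMatrix_mul_star hab, mul_one]
  -- `(p - ē, -q̄)` is a column of `g - ē`, hence an eigenvector for `e` unless it vanishes.
  set n := Complex.normSq (p - conj e) + Complex.normSq q with hn
  have hn0 : 0 ≤ n := add_nonneg (Complex.normSq_nonneg _) (Complex.normSq_nonneg _)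
  rcases hn0.eq_or_lt with hz | hpos
  · -- In the degenerate case the matrix is `diag(ē, e)`, conjugate to `diag(e, ē)` by a swap.
    have h1 : p - conj e = 0 := by
      rw [← Complex.normSq_eq_zero]
      linarith [Complex.normSq_nonneg (p - conj e), Complex.normSq_nonneg q]
    have h2 : q = 0 := by
      rw [← Complex.normSq_eq_zero]
      linarith [Complex.normSq_nonneg (p - conj e), Complex.normSq_nonneg q]
    refine ⟨0, 1, by simp, ?_⟩
    rw [suMatrix_mul, suMatrix_mul, h2, sub_eq_zero.mp h1]
    simp
  · set r : ℂ := (((Real.sqrt n)⁻¹ : ℝ) : ℂ) with hr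
    have hrr : conj r = r := Complex.conj_ofReal _
    have hrn : r * r * ((p - conj e) * conj (p - conj e) + q * conj q) = 1 := by
      rw [Complex.mul_conj, Complex.mul_conj, hr, ← Complex.ofReal_add, ← hn]
      norm_cast
      rw [← mul_inv, Real.mul_self_sqrt hn0, inv_mul_cancel₀ hpos.ne']
    refine ⟨r * (p - conj e), r * q, ?_, ?_⟩
    · rw [map_mul, map_mul, hrr]
      linear_combination hrn
    · rw [suMatrix_mul, suMatrix_mul]
      simp only [map_mul, map_sub, hrr, map_zero, Complex.conj_conj]
      congr 1
      · linear_combination r * p * htr - r * h + r * he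
      · linear_combination r * q * htr

/-- The real part of `p`, i.e. half the trace of the product, is a convex combination of
`cos π(u₁ + u₂)` and `cos π(u₁ - u₂)`, with weights determined by the conjugating matrix. -/
lemma diag_mul_conj {a b : ℂ} (h : a * conj a + b * conj b = 1) (u₁ u₂ : ℝ) :
    ∃ p q : ℂ, p * conj p + q * conj q = 1 ∧
      diagExp u₁ * (suMatrix a b * diagExp u₂ * (suMatrix a b)⁻¹) = suMatrix p q ∧
      p.re = Complex.normSq a * Real.cos (Real.pi * (u₁ + u₂)) +
        Complex.normSq b * Real.cos (Real.pi * (u₁ - u₂)) := by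
  rw [suMatrix_inv h, diagExp_eq_suMatrix, diagExp_eq_suMatrix]
  have he := exp_pi_mul_conj u₁
  have hf := exp_pi_mul_conj u₂
  have her := exp_pi_re u₁
  have hfr := exp_pi_re u₂
  have hei := exp_pi_im u₁
  have hfi := exp_pi_im u₂
  set e := Complex.exp (Real.pi * u₁ * Complex.I)
  set f := Complex.exp (Real.pi * u₂ * Complex.I)
  refine ⟨e * (f * (a * conj a) + conj f * (b * conj b)), e * (a * b * (conj f - f)), ?_, ?_, ?_⟩
  · simp only [map_mul, map_add, map_sub, Complex.conj_conj]
    linear_combination (f * (a * conj a) + conj f * (b * conj b)) *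
      (conj f * (a * conj a) + f * (b * conj b)) * he +
      a * conj a * b * conj b * (conj f - f) * (f - conj f) * he +
      (a * conj a + b * conj b) ^ 2 * hf + (a * conj a + b * conj b + 1) * h
  · simp only [suMatrix_mul]
    congr 1 <;> simp only [map_mul, map_add, map_sub, map_neg, map_zero, Complex.conj_conj] <;> ring
  · rw [Complex.mul_conj, Complex.mul_conj, mul_add, mul_add, mul_sub, Real.cos_add, Real.cos_sub,
      ← her, ← hfr, ← hei, ← hfi]
    simp
    ring

lemma trace_suMatrix (a b : ℂ) : (suMatrix a b).trace = ((2 * a.re : ℝ) : ℂ) := by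
  rw [suMatrix, Matrix.trace_fin_two_of, Complex.add_conj]

/-- The inequalities defining `Δ` in terms of cosines. -/
lemma polytope_iff_cos {u₁ u₂ u₃ : ℝ} (h₁ : u₁ ∈ Set.Icc (0 : ℝ) 1)
    (h₂ : u₂ ∈ Set.Icc (0 : ℝ) 1) (h₃ : u₃ ∈ Set.Icc (0 : ℝ) 1) :
    (u₃ ≤ u₁ + u₂ ∧ u₁ ≤ u₂ + u₃ ∧ u₂ ≤ u₃ + u₁ ∧ u₁ + u₂ + u₃ ≤ 2) ↔
      Real.cos (Real.pi * (u₁ + u₂)) ≤ Real.cos (Real.pi * u₃) ∧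
      Real.cos (Real.pi * u₃) ≤ Real.cos (Real.pi * (u₁ - u₂)) := by
  obtain ⟨h10, h11⟩ := h₁
  obtain ⟨h20, h21⟩ := h₂
  obtain ⟨h30, h31⟩ := h₃
  have key : ∀ {x y : ℝ}, x ∈ Set.Icc (0 : ℝ) 1 → y ∈ Set.Icc (0 : ℝ) 1 →
      (Real.cos (Real.pi * x) ≤ Real.cos (Real.pi * y) ↔ y ≤ x) := by
    intro x y hx hy
    have hpi := Real.pi_pos
    rw [Real.strictAntiOn_cos.le_iff_ge
      ⟨mul_nonneg hpi.le hx.1, mul_le_of_le_one_right hpi.le hx.2⟩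
      ⟨mul_nonneg hpi.le hy.1, mul_le_of_le_one_right hpi.le hy.2⟩]
    exact mul_le_mul_iff_right₀ hpi
  have hdiff : Real.cos (Real.pi * (u₁ - u₂)) = Real.cos (Real.pi * |u₁ - u₂|) := by
    rw [← Real.cos_abs, abs_mul, abs_of_pos Real.pi_pos]
  have habs : |u₁ - u₂| ≤ 1 := abs_le.mpr ⟨by linarith, by linarith⟩
  rw [hdiff, key ⟨h30, h31⟩ ⟨abs_nonneg _, habs⟩, abs_le]
  rcases le_total (u₁ + u₂) 1 with hs | hs
  · rw [key ⟨by linarith, hs⟩ ⟨h30, h31⟩]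
    constructor
    · rintro ⟨_, _, _, _⟩
      exact ⟨by linarith, by linarith, by linarith⟩
    · rintro ⟨_, _, _⟩
      exact ⟨by linarith, by linarith, by linarith, by linarith⟩
  · -- Reflect `u₁ + u₂` to `2 - (u₁ + u₂)`, which lies in `[0, 1]`.
    have hrefl : Real.cos (Real.pi * (u₁ + u₂)) = Real.cos (Real.pi * (2 - (u₁ + u₂))) := by
      rw [← Real.cos_two_pi_sub]
      congr 1
      ring
    rw [hrefl, key ⟨by linarith, by linarith⟩ ⟨h30, h31⟩]
    constructor
    · rintro ⟨_, _, _, _⟩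
      exact ⟨by linarith, by linarith, by linarith⟩
    · rintro ⟨_, _, _⟩
      exact ⟨by linarith, by linarith, by linarith, by linarith⟩

/-- The product of the three conjugacy classes of `exp(uᵢρ)` in `SU(2)` contains the
identity if and only if `(u₁, u₂, u₃)` lies in the Jeffrey–Weitsman polytope `Δ`. -/
theorem product_of_conjugacy_classes_contains_identity_iff
    (u₁ u₂ u₃ : ℝ) (h₁ : u₁ ∈ Set.Icc (0 : ℝ) 1) (h₂ : u₂ ∈ Set.Icc (0 : ℝ) 1)
    (h₃ : u₃ ∈ Set.Icc (0 : ℝ) 1) :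
    (∃ g₁ g₂ g₃ : Matrix (Fin 2) (Fin 2) ℂ,
        g₁ ∈ Matrix.specialUnitaryGroup (Fin 2) ℂ ∧
        g₂ ∈ Matrix.specialUnitaryGroup (Fin 2) ℂ ∧
        g₃ ∈ Matrix.specialUnitaryGroup (Fin 2) ℂ ∧
        (∃ h ∈ Matrix.specialUnitaryGroup (Fin 2) ℂ, g₁ = h * diagExp u₁ * h⁻¹) ∧
        (∃ h ∈ Matrix.specialUnitaryGroup (Fin 2) ℂ, g₂ = h * diagExp u₂ * h⁻¹) ∧
        (∃ h ∈ Matrix.specialUnitaryGroup (Fin 2) ℂ, g₃ = h * diagExp u₃ * h⁻¹) ∧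
        g₁ * g₂ * g₃ = 1) ↔
      u₃ ≤ u₁ + u₂ ∧ u₁ ≤ u₂ + u₃ ∧ u₂ ≤ u₃ + u₁ ∧ u₁ + u₂ + u₃ ≤ 2 := by
  rw [polytope_iff_cos h₁ h₂ h₃]
  have hcos : Real.cos (Real.pi * (u₁ + u₂)) ≤ Real.cos (Real.pi * (u₁ - u₂)) := by
    have hs : ∀ {u : ℝ}, u ∈ Set.Icc (0 : ℝ) 1 → 0 ≤ Real.sin (Real.pi * u) := fun hu =>
      Real.sin_nonneg_of_nonneg_of_le_pi (mul_nonneg Real.pi_pos.le hu.1)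
        (mul_le_of_le_one_right Real.pi_pos.le hu.2)
    rw [mul_add, mul_sub, Real.cos_add, Real.cos_sub]
    linarith [mul_nonneg (hs h₁) (hs h₂)]
  constructor
  · rintro ⟨g₁, g₂, g₃, -, -, -, ⟨k₁, hk₁, rfl⟩, ⟨k₂, hk₂, rfl⟩, ⟨k₃, hk₃, rfl⟩, hprod⟩
    have hunit : ∀ {k : Matrix (Fin 2) (Fin 2) ℂ},
        k ∈ Matrix.specialUnitaryGroup (Fin 2) ℂ → IsUnit k.det := fun hk => by
      rw [(Matrix.mem_specialUnitaryGroup_iff.mp hk).2]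
      exact isUnit_one
    have hu₁ := hunit hk₁
    have hu₂ := hunit hk₂
    have hu₃ := hunit hk₃
    obtain ⟨a₁, b₁, hab₁, rfl⟩ := exists_eq_suMatrix hk₁
    obtain ⟨a₂, b₂, hab₂, rfl⟩ := exists_eq_suMatrix hk₂
    obtain ⟨a, b, hab, hk⟩ := exists_eq_suMatrix
      (mul_mem (suMatrix_inv hab₁ ▸ suMatrix_mem (by simp; linear_combination hab₁) :
        (suMatrix a₁ b₁)⁻¹ ∈ Matrix.specialUnitaryGroup (Fin 2) ℂ) hk₂)
    obtain ⟨p, q, -, hpq, hre⟩ := diag_mul_conj hab u₁ u₂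
    have hn : Complex.normSq a + Complex.normSq b = 1 := by
      rw [Complex.mul_conj, Complex.mul_conj] at hab
      exact_mod_cast hab
    -- Compare the traces of `g₁ g₂` and of `g₃⁻¹`.
    have hp : p.re = Real.cos (Real.pi * u₃) := by
      have hD : diagExp u₃ * suMatrix (conj (Complex.exp (Real.pi * u₃ * Complex.I))) 0 = 1 := by
        have := suMatrix_mul_star (a := Complex.exp (Real.pi * u₃ * Complex.I)) (b := 0)
          (by simpa using exp_pi_mul_conj u₃)
        rwa [neg_zero, ← diagExp_eq_suMatrix] at this
      have hinv : suMatrix a₁ b₁ * diagExp u₁ * (suMatrix a₁ b₁)⁻¹ *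
          (suMatrix a₂ b₂ * diagExp u₂ * (suMatrix a₂ b₂)⁻¹) =
          k₃ * suMatrix (conj (Complex.exp (Real.pi * u₃ * Complex.I))) 0 * k₃⁻¹ := by
        refine left_inv_eq_right_inv hprod ?_
        calc _ = k₃ * (diagExp u₃ * ((k₃⁻¹ * k₃) *
              suMatrix (conj (Complex.exp (Real.pi * u₃ * Complex.I))) 0)) * k₃⁻¹ := by
              simp only [mul_assoc]
          _ = 1 := by rw [Matrix.nonsing_inv_mul _ hu₃, one_mul, hD, mul_one,
              Matrix.mul_nonsing_inv _ hu₃]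
      have htr := congrArg Matrix.trace hinv
      rw [Matrix.trace_mul_comm (k₃ * _), ← mul_assoc k₃⁻¹, Matrix.nonsing_inv_mul _ hu₃, one_mul,
        trace_suMatrix, mul_assoc (_ * diagExp u₁), mul_assoc (suMatrix a₁ b₁),
        Matrix.trace_mul_comm (suMatrix a₁ b₁)] at htr
      have hcon : diagExp u₁ * ((suMatrix a₁ b₁)⁻¹ *
          (suMatrix a₂ b₂ * diagExp u₂ * (suMatrix a₂ b₂)⁻¹)) * suMatrix a₁ b₁ =
          suMatrix p q := by
        rw [← hpq, ← hk, Matrix.mul_inv_rev, Matrix.nonsing_inv_nonsing_inv _ hu₁]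
        simp only [mul_assoc]
      rw [hcon, trace_suMatrix, Complex.conj_re, exp_pi_re] at htr
      have := Complex.ofReal_injective htr
      linarith
    have ha := Complex.normSq_nonneg a
    have hb := Complex.normSq_nonneg b
    rw [← hp, hre]
    have hmul_a := mul_le_mul_of_nonneg_left hcos ha
    have hmul_b := mul_le_mul_of_nonneg_left hcos hb
    constructor
    · linear_combination hmul_b - Real.cos (Real.pi * (u₁ + u₂)) * hn
    · linear_combination hmul_a + Real.cos (Real.pi * (u₁ - u₂)) * hn
  · rintro ⟨hlo, hhi⟩
    -- Conjugating by the real matrix with entries `√s`, `√t` realizes the weights `s`, `t`.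
    obtain ⟨s, t, hs, ht, hst, hc⟩ : Real.cos (Real.pi * u₃) ∈
        segment ℝ (Real.cos (Real.pi * (u₁ + u₂))) (Real.cos (Real.pi * (u₁ - u₂))) := by
      rw [segment_eq_Icc hcos]
      exact ⟨hlo, hhi⟩
    have hsqrt : ∀ {x : ℝ}, 0 ≤ x → ((√x : ℝ) : ℂ) * conj ((√x : ℝ) : ℂ) = x := fun hx => by
      rw [Complex.conj_ofReal, ← Complex.ofReal_mul, Real.mul_self_sqrt hx]
    have hab : ((√s : ℝ) : ℂ) * conj ((√s : ℝ) : ℂ) + ((√t : ℝ) : ℂ) * conj ((√t : ℝ) : ℂ) = 1 := by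
      rw [hsqrt hs, hsqrt ht]
      exact_mod_cast hst
    obtain ⟨p, q, hpq1, hpq, hre⟩ := diag_mul_conj hab u₁ u₂
    rw [Complex.normSq_ofReal, Complex.normSq_ofReal, Real.mul_self_sqrt hs,
      Real.mul_self_sqrt ht] at hre
    have hD : ∀ u : ℝ, diagExp u ∈ Matrix.specialUnitaryGroup (Fin 2) ℂ := fun u => by
      rw [diagExp_eq_suMatrix]
      exact suMatrix_mem (by simpa using exp_pi_mul_conj u)
    have hinv1 : conj p * conj (conj p) + -q * conj (-q) = 1 := by
      simp only [Complex.conj_conj, map_neg]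
      linear_combination hpq1
    have hk := suMatrix_mem hab
    have hk' : (suMatrix (√s : ℝ) (√t : ℝ))⁻¹ ∈ Matrix.specialUnitaryGroup (Fin 2) ℂ := by
      rw [suMatrix_inv hab]
      exact suMatrix_mem (by simp only [Complex.conj_conj, map_neg]; linear_combination hab)
    refine ⟨diagExp u₁, _, suMatrix (conj p) (-q), hD u₁, mul_mem (mul_mem hk (hD u₂)) hk',
      suMatrix_mem hinv1, ⟨1, one_mem _, by simp⟩, ⟨_, hk, rfl⟩, ?_, ?_⟩
    · exact exists_conj_diagExp hinv1 (by rw [Complex.conj_re, hre, ← hc]; simp)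
    · rw [hpq, suMatrix_mul_star hpq1]
end
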